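/- Fix real numbers x0 < x1 and y ∈ (x0, x1], and let α : ℝ → ℝ be Lebesgue integrable and square-integrable on (x0, x1), with ‖α‖ := ∫_{x0}^{x1} |α| and ‖α‖₂ := ( ∫_{x0}^{x1} |α|² )^{1/2}. Then there exists a function g : ℝ → ℂ which vanishes outside [0, 2(y − x0)], is Lebesgue integrable and square-integrable, satisfies ( ∫_ℝ |g|² )^{1/2} ≤ ( ‖α‖₂ / √2 ) · exp( √(x1 − x0) · ‖α‖₂ ), and such that for every ω ∈ ℝ, E_α^{(x0,y)}(ω) = 1 + ∫_ℝ g(t)·e^{iωt} dt. -/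

import Mathlib

open MeasureTheory

/-- The iterates `A_ω^j 𝟙` of the conjugate-linear Volterra operator
`A_ω f(t) = ∫_{x0}^t α(s) e^{2i(s−x0)ω} conj(f(s)) ds`. -/
noncomputable def Aiter (x0 : ℝ) (α : ℝ → ℝ) (ω : ℂ) : ℕ → ℝ → ℂ
  | 0 => fun _ => 1
  | j + 1 => fun t =>
      ∫ s in x0..t,
        (α s : ℂ) * Complex.exp (2 * Complex.I * ((s : ℂ) - (x0 : ℂ)) * ω)
          * (starRingEnd ℂ) (Aiter x0 α ω j s)

/-- The harmonic exponential `E_α^{(x0,y)}(ω) = Σ_{j≥0} A_ω^j 𝟙(y)`. -/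
noncomputable def harmE (x0 y : ℝ) (α : ℝ → ℝ) (ω : ℂ) : ℂ :=
  ∑' j : ℕ, Aiter x0 α ω j y

/-!
For real `ω`, the substitution `v = 2 (s - x0)` writes `A_ω^1(t)` as the Fourier transform of the
restriction to `[0, 2 (t - x0)]` of `β(v) = α(x0 + v/2) / 2`, whose `L²` norm is `‖α‖₂ / √2`. If
`A_ω^j(s)` is the Fourier transform of a real density `f` supported in `[0, c]`, `c = 2 (s - x0)`,
then `exp(iωc) · conj(A_ω^j(s))` is the Fourier transform of `f(c - ·)`, which is supported in
`[0, c]` and has the same `L²` norm. So the recursion lifts to a Bochner integral in `L²(ℝ)`, and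
Minkowski's inequality bounds the density of `A_ω^{j+1}(y)` by
`‖β‖₂ (∫_{x0}^y |α|)^j / j!`. Summing over `j` gives `‖β‖₂ exp(∫_{x0}^y |α|)`, and
`∫_{x0}^y |α| ≤ √(x1 - x0) ‖α‖₂` by Cauchy–Schwarz.
-/

open Set
open scoped ENNReal

theorem absolutelyContinuousOnInterval_pow {f : ℝ → ℝ} {a b : ℝ}
    (hf : AbsolutelyContinuousOnInterval f a b) (n : ℕ) :
    AbsolutelyContinuousOnInterval (fun x => f x ^ n) a b := by
  induction n with
  | zero =>
    simpa only [pow_zero] using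
      ((LipschitzWith.const (1 : ℝ)).lipschitzOnWith (s := uIcc a b)).absolutelyContinuousOnInterval
  | succ n ih => simpa only [pow_succ] using ih.fun_mul hf

theorem integral_mul_primitive_pow {f : ℝ → ℝ} {a b : ℝ} (hf : IntervalIntegrable f volume a b)
    (n : ℕ) :
    ∫ s in a..b, f s * (∫ r in a..s, f r) ^ n = (∫ r in a..b, f r) ^ (n + 1) / (n + 1) := by
  have hprim : AbsolutelyContinuousOnInterval (fun s => (∫ r in a..s, f r) ^ (n + 1)) a b :=
    absolutelyContinuousOnInterval_pow
      (hf.absolutelyContinuousOnInterval_intervalIntegral left_mem_uIcc) (n + 1)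
  have hderiv : ∀ᵐ s, s ∈ uIoc a b → deriv (fun s => (∫ r in a..s, f r) ^ (n + 1)) s =
      (n + 1) * (f s * (∫ r in a..s, f r) ^ n) := by
    filter_upwards [hf.ae_hasDerivAt_integral] with s hs hmem
    have := ((hs (uIoc_subset_uIcc hmem) a left_mem_uIcc).fun_pow (n + 1)).deriv
    rw [this, Nat.add_sub_cancel]
    push_cast
    ring
  have hintegral := hprim.integral_deriv_eq_sub
  rw [intervalIntegral.integral_congr_ae hderiv, intervalIntegral.integral_const_mul,
    intervalIntegral.integral_same, zero_pow n.succ_ne_zero, sub_zero] at hintegral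
  rw [← hintegral]
  field_simp

theorem le_mul_pow_div_factorial_of_le_integral {k : ℝ → ℝ} {u : ℕ → ℝ → ℝ} {a b C : ℝ}
    (hk : IntervalIntegrable k volume a b) (hk_nonneg : ∀ s, 0 ≤ k s)
    (hu : ∀ n, ContinuousOn (u n) (Icc a b)) (hzero : ∀ t ∈ Icc a b, u 0 t ≤ C)
    (hsucc : ∀ n, ∀ t ∈ Icc a b, u (n + 1) t ≤ ∫ s in a..t, k s * u n s)
    (n : ℕ) {t : ℝ} (ht : t ∈ Icc a b) :
    u n t ≤ C * ((∫ s in a..t, k s) ^ n / n.factorial) := by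
  induction n generalizing t with
  | zero => simpa using hzero t ht
  | succ n ih =>
    have hsub : Icc a t ⊆ Icc a b := Icc_subset_Icc_right ht.2
    have hkt : IntervalIntegrable k volume a t :=
      hk.mono_set (by rwa [uIcc_of_le ht.1, uIcc_of_le (ht.1.trans ht.2)])
    have hprim : ContinuousOn (fun s => ∫ r in a..s, k r) (uIcc a t) :=
      intervalIntegral.continuousOn_primitive_interval' hkt left_mem_uIcc
    calc u (n + 1) t ≤ ∫ s in a..t, k s * u n s := hsucc n t ht
      _ ≤ ∫ s in a..t, k s * (C * ((∫ r in a..s, k r) ^ n / n.factorial)) := by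
        refine intervalIntegral.integral_mono_on ht.1 (hkt.mul_continuousOn ?_)
          (hkt.mul_continuousOn (by fun_prop)) fun s hs =>
            mul_le_mul_of_nonneg_left (ih (hsub hs)) (hk_nonneg s)
        rw [uIcc_of_le ht.1]
        exact (hu n).mono hsub
      _ = C / n.factorial * ∫ s in a..t, k s * (∫ r in a..s, k r) ^ n := by
        rw [← intervalIntegral.integral_const_mul]
        congr 1 with s
        ring
      _ = C * ((∫ s in a..t, k s) ^ (n + 1) / (n + 1).factorial) := by
        rw [integral_mul_primitive_pow hkt, Nat.factorial_succ]
        push_cast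
        field_simp

theorem hasSum_mul_pow_div_factorial (C a : ℝ) :
    HasSum (fun n : ℕ => C * (a ^ n / n.factorial)) (C * Real.exp a) := by
  rw [Real.exp_eq_exp_ℝ]
  exact (NormedSpace.expSeries_div_hasSum_exp a).mul_left C

theorem intervalIntegral_mem_ker {E F : Type*} [NormedAddCommGroup E] [NormedSpace ℝ E]
    [CompleteSpace E] [NormedAddCommGroup F] [NormedSpace ℝ F] [CompleteSpace F]
    (L : E →L[ℝ] F) {φ : ℝ → E} {a b : ℝ} (hφ : IntervalIntegrable φ volume a b)
    (hmem : ∀ s ∈ uIoc a b, φ s ∈ L.ker) : ∫ s in a..b, φ s ∈ L.ker := by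
  have hzero : ∀ᵐ s, s ∈ uIoc a b → L (φ s) = 0 := .of_forall hmem
  rw [LinearMap.mem_ker, ContinuousLinearMap.coe_coe, ← L.intervalIntegral_comp_comm hφ,
    intervalIntegral.integral_zero_ae hzero]

theorem integral_norm_le_sqrt_mul_sqrt {X E : Type*} [MeasurableSpace X] {μ : Measure X}
    [IsFiniteMeasure μ] [NormedAddCommGroup E] {f : X → E} (hf : MemLp f 2 μ) :
    ∫ x, ‖f x‖ ∂μ ≤ √(μ.real univ) * √(∫ x, ‖f x‖ ^ 2 ∂μ) := by
  have hholder := integral_mul_le_Lp_mul_Lq_of_nonneg (μ := μ) Real.HolderConjugate.two_two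
    (f := fun _ => (1 : ℝ)) (g := fun x => ‖f x‖) (.of_forall fun _ => zero_le_one)
    (.of_forall fun _ => norm_nonneg _) (memLp_const _) (by simpa using hf.norm)
  simpa [Real.sqrt_eq_rpow] using hholder

theorem intervalIntegral_norm_le_sqrt_mul_sqrt {E : Type*} [NormedAddCommGroup E] {f : ℝ → E}
    (hf : MemLp f 2 volume) {a b : ℝ} (hab : a ≤ b) :
    ∫ s in a..b, ‖f s‖ ≤ √(b - a) * √(∫ s, ‖f s‖ ^ 2) := by
  rw [intervalIntegral.integral_of_le hab]
  refine (integral_norm_le_sqrt_mul_sqrt (hf.restrict (Ioc a b))).trans ?_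
  rw [measureReal_restrict_apply_univ, Real.volume_real_Ioc_of_le hab]
  gcongr
  · exact .of_forall fun s => by positivity
  · exact hf.integrable_norm_pow two_ne_zero
  · exact Measure.restrict_le_self

theorem norm_lp_two_eq_sqrt_integral {X E : Type*} [MeasurableSpace X] {μ : Measure X}
    [NormedAddCommGroup E] (f : Lp E 2 μ) : ‖f‖ = √(∫ x, ‖f x‖ ^ 2 ∂μ) := by
  rw [Lp.norm_def, (Lp.memLp f).eLpNorm_eq_integral_rpow_norm two_ne_zero ENNReal.ofNat_ne_top,
    ENNReal.toReal_ofReal (by positivity)]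
  simp [Real.sqrt_eq_rpow]

section SupportedOn

variable {X E : Type*} [MeasurableSpace X] {μ : Measure X} {p : ℝ≥0∞} [Fact (1 ≤ p)]
  [NormedAddCommGroup E] [NormedSpace ℝ E] {s t : Set X}

/-- The closed subspace of `Lp` of functions vanishing almost everywhere outside `s`. It is encoded
as a kernel so that it is visibly closed and stable under Bochner integration. -/
noncomputable def lpSupportedOn (s : Set X) : Submodule ℝ (Lp E p μ) :=
  (LpToLpRestrictCLM X E ℝ μ p sᶜ).ker

theorem mem_lpSupportedOn (hs : MeasurableSet s) {f : Lp E p μ} :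
    f ∈ lpSupportedOn s ↔ ∀ᵐ x ∂μ, x ∉ s → f x = 0 := by
  have hrestrict := LpToLpRestrictCLM_coeFn ℝ sᶜ f
  change LpToLpRestrictCLM X E ℝ μ p sᶜ f = 0 ↔ ∀ᵐ x ∂μ, x ∈ sᶜ → f x = 0
  rw [Lp.eq_zero_iff_ae_eq_zero, ← ae_restrict_iff' hs.compl]
  exact ⟨hrestrict.symm.trans, hrestrict.trans⟩

theorem lpSupportedOn_mono (hs : MeasurableSet s) (ht : MeasurableSet t) (hst : s ⊆ t) :
    (lpSupportedOn s : Submodule ℝ (Lp E p μ)) ≤ lpSupportedOn t := fun f hf => by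
  rw [mem_lpSupportedOn ht]
  filter_upwards [(mem_lpSupportedOn hs).1 hf] with x hx hxt using hx fun hxs => hxt (hst hxs)

theorem isClosed_lpSupportedOn :
    IsClosed ((lpSupportedOn s : Submodule ℝ (Lp E p μ)) : Set (Lp E p μ)) :=
  (LpToLpRestrictCLM X E ℝ μ p sᶜ).isClosed_ker

theorem indicator_ae_eq_of_mem_lpSupportedOn (hs : MeasurableSet s) {f : Lp E p μ}
    (hf : f ∈ lpSupportedOn s) : s.indicator f =ᵐ[μ] f := by
  filter_upwards [(mem_lpSupportedOn hs).1 hf] with x hx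
  by_cases hxs : x ∈ s
  · rw [indicator_of_mem hxs]
  · rw [indicator_of_notMem hxs, hx hxs]

theorem exists_ofReal_representative (hs : MeasurableSet s) {f : Lp ℝ p μ}
    (hf : f ∈ lpSupportedOn s) :
    ∃ g : X → ℂ, (∀ x ∉ s, g x = 0) ∧ g =ᵐ[μ] fun x => (f x : ℂ) :=
  ⟨fun x => (s.indicator f x : ℝ),
    fun x hx => by simp only [indicator_of_notMem hx, Complex.ofReal_zero],
    (indicator_ae_eq_of_mem_lpSupportedOn hs hf).fun_comp Complex.ofReal⟩

theorem integrable_of_mem_lpSupportedOn (hs : MeasurableSet s) (hμs : μ s ≠ ∞) {f : Lp E p μ}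
    (hf : f ∈ lpSupportedOn s) : Integrable f μ := by
  have : IsFiniteMeasure (μ.restrict s) := ⟨by simpa using hμs.lt_top⟩
  rw [← integrable_congr (indicator_ae_eq_of_mem_lpSupportedOn hs hf), integrable_indicator_iff hs]
  exact ((Lp.memLp f).restrict s).integrable Fact.out

end SupportedOn

section ReflectTruncate

variable {E : Type*} [NormedAddCommGroup E] {p : ℝ≥0∞}

/-- The reflection `f ↦ f (c - ·)` on `Lp`; on the Fourier side it is conjugation followed by
multiplication by `exp (i ω c)`. -/
noncomputable def lpReflect (c : ℝ) (f : Lp E p (volume : Measure ℝ)) :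
    Lp E p (volume : Measure ℝ) :=
  Lp.compMeasurePreserving (c - ·) (Measure.measurePreserving_sub_left volume c) f

theorem lpReflect_ae_eq (c : ℝ) (f : Lp E p volume) : lpReflect c f =ᵐ[volume] fun v => f (c - v) :=
  Lp.coeFn_compMeasurePreserving f (Measure.measurePreserving_sub_left volume c)

theorem norm_lpReflect (c : ℝ) (f : Lp E p volume) : ‖lpReflect c f‖ = ‖f‖ :=
  Lp.norm_compMeasurePreserving f (Measure.measurePreserving_sub_left volume c)

theorem continuous_lpReflect [Fact (1 ≤ p)] (hp : p ≠ ∞) {Z : Type*} [TopologicalSpace Z]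
    {c : Z → ℝ} {f : Z → Lp E p volume} (hc : Continuous c) (hf : Continuous f) :
    Continuous fun z => lpReflect (c z) (f z) :=
  hf.compMeasurePreservingLp (g := fun z => ⟨(c z - ·), by fun_prop⟩)
    (ContinuousMap.continuous_of_continuous_uncurry _ (by dsimp [Function.uncurry]; fun_prop))
    (fun z => Measure.measurePreserving_sub_left volume (c z)) hp

theorem lpReflect_mem_lpSupportedOn [Fact (1 ≤ p)] [NormedSpace ℝ E] {c : ℝ} {f : Lp E p volume}
    (hf : f ∈ lpSupportedOn (Icc 0 c)) :
    lpReflect c f ∈ lpSupportedOn (Icc 0 c) := by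
  rw [mem_lpSupportedOn measurableSet_Icc] at hf ⊢
  have hreflect := (Measure.measurePreserving_sub_left volume c).quasiMeasurePreserving.ae hf
  filter_upwards [lpReflect_ae_eq c f, hreflect] with v hv hzero hmem
  rw [hv]
  exact hzero fun h => hmem ⟨by linarith [h.2], by linarith [h.1]⟩

/-- The truncation `f · 1_{(0, c]}` on `Lp`, which cuts the density of the first Volterra iterate
down to the part accumulated up to `c`. -/
noncomputable def lpTruncate (c : ℝ) (f : Lp E p (volume : Measure ℝ)) :
    Lp E p (volume : Measure ℝ) :=
  ((Lp.memLp f).indicator (measurableSet_Ioc (a := 0) (b := c))).toLp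

theorem lpTruncate_ae_eq (c : ℝ) (f : Lp E p volume) :
    lpTruncate c f =ᵐ[volume] (Ioc 0 c).indicator f :=
  MemLp.coeFn_toLp _

theorem norm_lpTruncate_le (c : ℝ) (f : Lp E p volume) : ‖lpTruncate c f‖ ≤ ‖f‖ := by
  apply Lp.norm_le_norm_of_ae_le
  filter_upwards [lpTruncate_ae_eq c f] with v hv
  rw [hv]
  exact norm_indicator_le_norm_self _ _

theorem lpTruncate_mem_lpSupportedOn [Fact (1 ≤ p)] [NormedSpace ℝ E] (c : ℝ) (f : Lp E p volume) :
    lpTruncate c f ∈ lpSupportedOn (Icc 0 c) := by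
  rw [mem_lpSupportedOn measurableSet_Icc]
  filter_upwards [lpTruncate_ae_eq c f] with v hv hmem
  rw [hv, indicator_of_notMem fun h => hmem (Ioc_subset_Icc_self h)]

theorem symmDiff_Ioc_subset_uIoc {ι : Type*} [LinearOrder ι] (a b c : ι) :
    symmDiff (Ioc a b) (Ioc a c) ⊆ uIoc b c := by
  grind [mem_uIoc]

theorem continuous_lpTruncate [Fact (1 ≤ p)] (hp : p ≠ ∞) (f : Lp E p volume) :
    Continuous fun c => lpTruncate c f := by
  refine Metric.continuous_iff.2 fun c ε hε => ?_
  obtain ⟨δ, hδ, hsmall⟩ := (Lp.memLp f).eLpNorm_indicator_le Fact.out hp (half_pos hε)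
  refine ⟨δ, hδ, fun d hd => lt_of_le_of_lt ?_ (half_lt_self hε)⟩
  have hvol : volume (symmDiff (Ioc 0 d) (Ioc 0 c)) ≤ ENNReal.ofReal δ := by
    refine (measure_mono (symmDiff_Ioc_subset_uIoc 0 d c)).trans ?_
    rw [Real.volume_uIoc]
    exact ENNReal.ofReal_le_ofReal (by rw [abs_sub_comm]; exact hd.le)
  rw [← edist_le_ofReal (half_pos hε).le, lpTruncate, lpTruncate, Lp.edist_toLp_toLp,
    eLpNorm_indicator_sub_indicator]
  exact hsmall _ (measurableSet_Ioc.symmDiff measurableSet_Ioc) hvol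

end ReflectTruncate

theorem memLp_indicator_Icc_exp (ω K : ℝ) {p : ℝ≥0∞} :
    MemLp ((Icc 0 K).indicator fun v : ℝ => Complex.exp (Complex.I * ω * v)) p volume := by
  rw [memLp_indicator_iff_restrict measurableSet_Icc]
  exact .of_bound (by fun_prop) 1 (.of_forall fun v => by simp [Complex.norm_exp])

/-- The functional `f ↦ ∫_{[0, K]} f(v) exp (i ω v) dv` on real `L²`, i.e. the Fourier transform at
`ω` of the functions supported in `[0, K]`; the cutoff makes the exponential an element of `L²`. -/
noncomputable def fourierPairing (ω K : ℝ) : Lp ℝ 2 (volume : Measure ℝ) →L[ℝ] ℂ :=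
  ((ContinuousLinearMap.lsmul ℝ ℝ).lpPairing volume 2 2).flip (memLp_indicator_Icc_exp ω K).toLp

theorem fourierPairing_apply (ω K : ℝ) (f : Lp ℝ 2 volume) :
    fourierPairing ω K f = ∫ v in Icc 0 K, f v * Complex.exp (Complex.I * ω * v) := by
  rw [fourierPairing, ContinuousLinearMap.flip_apply, ContinuousLinearMap.lpPairing_eq_integral,
    ← integral_indicator measurableSet_Icc]
  refine integral_congr_ae ?_
  filter_upwards [MemLp.coeFn_toLp (memLp_indicator_Icc_exp ω K)] with v hv
  rw [hv, ContinuousLinearMap.lsmul_apply, ← indicator_smul_apply]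
  simp only [Complex.real_smul]

theorem fourierPairing_eq_integral {ω K : ℝ} {f : Lp ℝ 2 volume}
    (hf : f ∈ lpSupportedOn (Icc 0 K)) :
    fourierPairing ω K f = ∫ v, f v * Complex.exp (Complex.I * ω * v) := by
  rw [fourierPairing_apply]
  refine setIntegral_eq_integral_of_ae_compl_eq_zero ?_
  filter_upwards [(mem_lpSupportedOn measurableSet_Icc).1 hf] with v hv hmem
  rw [hv hmem, Complex.ofReal_zero, zero_mul]

theorem fourierPairing_lpReflect {ω K c : ℝ} (hcK : c ≤ K) {f : Lp ℝ 2 volume}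
    (hf : f ∈ lpSupportedOn (Icc 0 c)) :
    fourierPairing ω K (lpReflect c f) =
      Complex.exp (Complex.I * ω * c) * (starRingEnd ℂ) (fourierPairing ω K f) := by
  have hmono : ∀ {h : Lp ℝ 2 volume}, h ∈ lpSupportedOn (Icc 0 c) → h ∈ lpSupportedOn (Icc 0 K) :=
    fun hh => lpSupportedOn_mono measurableSet_Icc measurableSet_Icc (Icc_subset_Icc_right hcK) hh
  rw [fourierPairing_eq_integral (hmono hf),
    fourierPairing_eq_integral (hmono (lpReflect_mem_lpSupportedOn hf)), ← integral_conj,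
    ← integral_const_mul, ← integral_sub_left_eq_self _ volume c]
  refine integral_congr_ae ?_
  filter_upwards [(Measure.measurePreserving_sub_left volume c).quasiMeasurePreserving.ae
    (lpReflect_ae_eq c f)] with v hv
  rw [hv, sub_sub_cancel, map_mul, Complex.conj_ofReal, ← Complex.exp_conj, mul_left_comm,
    ← Complex.exp_add]
  congr 2
  simp only [Complex.ofReal_sub, map_mul, Complex.conj_I, Complex.conj_ofReal]
  ring

section DensityIter

variable {E : Type*} [NormedAddCommGroup E] [NormedSpace ℝ E] {p : ℝ≥0∞} [Fact (1 ≤ p)]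
  {x0 : ℝ} {α : ℝ → ℝ} {β : Lp E p (volume : Measure ℝ)}

/-- The iterates of the Volterra operator of `Aiter` carried over to densities. If `β` is the
density whose truncations to `[0, 2 (t - x0)]` represent `Aiter x0 α ω 1 t`, then
`densityIter x0 α β n t` represents `Aiter x0 α ω (n + 1) t`. -/
noncomputable def densityIter (x0 : ℝ) (α : ℝ → ℝ) (β : Lp E p (volume : Measure ℝ)) :
    ℕ → ℝ → Lp E p (volume : Measure ℝ)
  | 0 => fun t => lpTruncate (2 * (t - x0)) β
  | n + 1 => fun t => ∫ s in x0..t, α s • lpReflect (2 * (s - x0)) (densityIter x0 α β n s)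

theorem intervalIntegrable_smul_lpReflect (hα : Integrable α) (hp : p ≠ ∞) {c : ℝ → ℝ}
    {F : ℝ → Lp E p volume} (hc : Continuous c) (hF : Continuous F) (a b : ℝ) :
    IntervalIntegrable (fun s => α s • lpReflect (c s) (F s)) volume a b :=
  hα.intervalIntegrable.smul_continuousOn (continuous_lpReflect hp hc hF).continuousOn

theorem continuous_densityIter (hα : Integrable α) (hp : p ≠ ∞) (n : ℕ) :
    Continuous (densityIter x0 α β n) := by
  induction n with
  | zero => exact (continuous_lpTruncate hp β).comp (by fun_prop : Continuous fun t => 2 * (t - x0))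
  | succ n ih =>
    exact intervalIntegral.continuous_primitive
      (intervalIntegrable_smul_lpReflect hα hp (by fun_prop) ih) x0

theorem densityIter_mem_lpSupportedOn [CompleteSpace E] (hα : Integrable α) (hp : p ≠ ∞) (n : ℕ)
    {t : ℝ} (ht : x0 ≤ t) : densityIter x0 α β n t ∈ lpSupportedOn (Icc 0 (2 * (t - x0))) := by
  induction n generalizing t with
  | zero => exact lpTruncate_mem_lpSupportedOn _ _
  | succ n ih =>
    refine intervalIntegral_mem_ker _ (intervalIntegrable_smul_lpReflect hα hp (by fun_prop)
      (continuous_densityIter hα hp n) x0 t) fun s hs => Submodule.smul_mem _ _ ?_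
    rw [uIoc_of_le ht] at hs
    have hsub : Icc 0 (2 * (s - x0)) ⊆ Icc 0 (2 * (t - x0)) :=
      Icc_subset_Icc_right (by linarith [hs.2])
    exact lpSupportedOn_mono measurableSet_Icc measurableSet_Icc hsub
      (lpReflect_mem_lpSupportedOn (ih hs.1.le))

theorem norm_densityIter_le (hα : Integrable α) (hp : p ≠ ∞) (n : ℕ) {t : ℝ} (ht : x0 ≤ t) :
    ‖densityIter x0 α β n t‖ ≤ ‖β‖ * ((∫ s in x0..t, |α s|) ^ n / n.factorial) := by
  refine le_mul_pow_div_factorial_of_le_integral (u := fun n t => ‖densityIter x0 α β n t‖)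
    hα.abs.intervalIntegrable (fun s => abs_nonneg (α s))
    (fun n => (continuous_densityIter hα hp n).norm.continuousOn)
    (fun t _ => norm_lpTruncate_le _ β) (fun n t ht => ?_) n (right_mem_Icc.2 ht)
  calc ‖densityIter x0 α β (n + 1) t‖
      ≤ ∫ s in x0..t, ‖α s • lpReflect (2 * (s - x0)) (densityIter x0 α β n s)‖ :=
        intervalIntegral.norm_integral_le_integral_norm ht.1
    _ = ∫ s in x0..t, |α s| * ‖densityIter x0 α β n s‖ := by
        simp only [norm_smul, norm_lpReflect, Real.norm_eq_abs]

theorem summable_densityIter [CompleteSpace E] (hα : Integrable α) (hp : p ≠ ∞) {t : ℝ}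
    (ht : x0 ≤ t) : Summable fun n => densityIter x0 α β n t :=
  .of_norm_bounded (hasSum_mul_pow_div_factorial _ _).summable
    fun n => norm_densityIter_le hα hp n ht

theorem norm_tsum_densityIter_le (hα : Integrable α) (hp : p ≠ ∞) {t : ℝ} (ht : x0 ≤ t) :
    ‖∑' n, densityIter x0 α β n t‖ ≤ ‖β‖ * Real.exp (∫ s in x0..t, |α s|) :=
  tsum_of_norm_bounded (hasSum_mul_pow_div_factorial _ _)
    fun n => norm_densityIter_le hα hp n ht

theorem tsum_densityIter_mem_lpSupportedOn [CompleteSpace E] (hα : Integrable α) (hp : p ≠ ∞)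
    {t : ℝ} (ht : x0 ≤ t) :
    ∑' n, densityIter x0 α β n t ∈ lpSupportedOn (Icc 0 (2 * (t - x0))) :=
  isClosed_lpSupportedOn.mem_of_tendsto (summable_densityIter hα hp ht).hasSum <|
    .of_forall fun _ => sum_mem fun n _ => densityIter_mem_lpSupportedOn hα hp n ht

end DensityIter

/-- The density of `Aiter x0 α ω 1`, obtained by substituting `v = 2 (s - x0)` in its defining
integral. -/
noncomputable def firstDensity (x0 : ℝ) (α : ℝ → ℝ) (v : ℝ) : ℝ :=
  2⁻¹ * α (x0 + v / 2)

theorem intervalIntegral_firstDensity_mul_exp (x0 : ℝ) (α : ℝ → ℝ) (ω t : ℝ) :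
    ∫ v in 0..2 * (t - x0), firstDensity x0 α v * Complex.exp (Complex.I * ω * v) =
      Aiter x0 α ω 1 t := by
  have hsubst := intervalIntegral.inv_smul_integral_comp_add_div (a := 0) (b := 2 * (t - x0))
    (fun s : ℝ => (α s : ℂ) * Complex.exp (2 * Complex.I * ((s : ℂ) - x0) * ω)) 2 x0
  rw [show x0 + 0 / 2 = x0 by ring, show x0 + 2 * (t - x0) / 2 = t by ring,
    ← intervalIntegral.integral_smul] at hsubst
  simp only [Aiter, map_one, mul_one]
  rw [← hsubst]
  congr 1 with v
  rw [firstDensity, Complex.real_smul]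
  push_cast
  rw [mul_assoc]
  congr 3
  ring

theorem memLp_firstDensity {α : ℝ → ℝ} (hα : MemLp α 2 volume) (x0 : ℝ) :
    MemLp (firstDensity x0 α) 2 volume := by
  have hshift : MemLp (fun u => α (x0 + u)) 2 volume :=
    hα.comp_measurePreserving (measurePreserving_add_left volume x0)
  have hmeas : AEStronglyMeasurable (fun v => α (x0 + v / 2)) volume := by
    simpa only [Function.comp_def, smul_eq_mul, inv_mul_eq_div] using
      hshift.aestronglyMeasurable.comp_quasiMeasurePreserving
        (Measure.quasiMeasurePreserving_smul volume (inv_ne_zero (two_ne_zero' ℝ)))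
  refine MemLp.const_mul ((memLp_two_iff_integrable_sq hmeas).2 ?_) 2⁻¹
  exact hshift.integrable_sq.comp_div two_ne_zero

theorem norm_toLp_firstDensity {α : ℝ → ℝ} (hα : MemLp α 2 volume) (x0 : ℝ) :
    ‖(memLp_firstDensity hα x0).toLp‖ = √(∫ x, ‖α x‖ ^ 2) / √2 := by
  have hsq : ∀ᵐ v, ‖(memLp_firstDensity hα x0).toLp _ v‖ ^ 2 = 4⁻¹ * ‖α (x0 + v / 2)‖ ^ 2 := by
    filter_upwards [(memLp_firstDensity hα x0).coeFn_toLp] with v hv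
    rw [hv, firstDensity, norm_mul, mul_pow]
    norm_num
  rw [norm_lp_two_eq_sqrt_integral, integral_congr_ae hsq, integral_const_mul,
    Measure.integral_comp_div (fun u => ‖α (x0 + u)‖ ^ 2) 2,
    integral_add_left_eq_self (fun u => ‖α u‖ ^ 2) x0, ← Real.sqrt_div' _ zero_le_two]
  congr 1
  simp only [abs_two, smul_eq_mul]
  ring

section FourierRepresentation

variable {x0 t : ℝ} {α : ℝ → ℝ} {β : Lp ℝ 2 (volume : Measure ℝ)}

theorem fourierPairing_lpTruncate (hβ : β =ᵐ[volume] firstDensity x0 α) {ω K : ℝ} (ht : x0 ≤ t)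
    (htK : 2 * (t - x0) ≤ K) :
    fourierPairing ω K (lpTruncate (2 * (t - x0)) β) = Aiter x0 α ω 1 t := by
  have hsupp : lpTruncate (2 * (t - x0)) β ∈ lpSupportedOn (Icc 0 K) :=
    lpSupportedOn_mono measurableSet_Icc measurableSet_Icc (Icc_subset_Icc_right htK)
      (lpTruncate_mem_lpSupportedOn _ β)
  rw [fourierPairing_eq_integral hsupp, ← intervalIntegral_firstDensity_mul_exp,
    intervalIntegral.integral_of_le (by linarith), ← integral_indicator measurableSet_Ioc]
  refine integral_congr_ae ?_
  filter_upwards [lpTruncate_ae_eq (2 * (t - x0)) β, hβ] with v htrunc hv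
  rw [htrunc]
  by_cases hmem : v ∈ Ioc 0 (2 * (t - x0))
  · rw [indicator_of_mem hmem, indicator_of_mem hmem, hv]
  · rw [indicator_of_notMem hmem, indicator_of_notMem hmem, Complex.ofReal_zero, zero_mul]

theorem fourierPairing_densityIter (hα : Integrable α) (hβ : β =ᵐ[volume] firstDensity x0 α)
    {ω K : ℝ} (n : ℕ) (ht : x0 ≤ t) (htK : 2 * (t - x0) ≤ K) :
    fourierPairing ω K (densityIter x0 α β n t) = Aiter x0 α ω (n + 1) t := by
  induction n generalizing t with
  | zero => exact fourierPairing_lpTruncate hβ ht htK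
  | succ n ih =>
    have hintegral := intervalIntegrable_smul_lpReflect hα ENNReal.ofNat_ne_top
      (by fun_prop : Continuous fun s => 2 * (s - x0))
      (continuous_densityIter (x0 := x0) (β := β) hα ENNReal.ofNat_ne_top n) x0 t
    rw [Aiter, densityIter, ← ContinuousLinearMap.intervalIntegral_comp_comm _ hintegral]
    refine intervalIntegral.integral_congr_ae (.of_forall fun s hs => ?_)
    rw [uIoc_of_le ht] at hs
    have hsK : 2 * (s - x0) ≤ K := by linarith [hs.2]
    have hsupp := densityIter_mem_lpSupportedOn (β := β) hα ENNReal.ofNat_ne_top n hs.1.le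
    rw [map_smul, fourierPairing_lpReflect hsK hsupp, ih hs.1.le hsK, Complex.real_smul,
      ← mul_assoc]
    congr 3
    push_cast
    ring

theorem hasSum_Aiter_succ (hα : Integrable α) (hβ : β =ᵐ[volume] firstDensity x0 α)
    (ht : x0 ≤ t) (ω : ℝ) :
    HasSum (fun n => Aiter x0 α ω (n + 1) t)
      (∫ v, (∑' n, densityIter x0 α β n t : Lp ℝ 2 volume) v *
        Complex.exp (Complex.I * ω * v)) := by
  have hp : (2 : ℝ≥0∞) ≠ ∞ := ENNReal.ofNat_ne_top
  simp_rw [← fourierPairing_eq_integral (tsum_densityIter_mem_lpSupportedOn (β := β) hα hp ht),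
    ← fourierPairing_densityIter (ω := ω) hα hβ _ ht le_rfl]
  exact (fourierPairing ω (2 * (t - x0))).hasSum (summable_densityIter hα hp ht).hasSum

theorem harmE_eq_one_add_integral (hα : Integrable α) (hβ : β =ᵐ[volume] firstDensity x0 α)
    (ht : x0 ≤ t) (ω : ℝ) :
    harmE x0 t α ω = 1 + ∫ v, (∑' n, densityIter x0 α β n t : Lp ℝ 2 volume) v *
      Complex.exp (Complex.I * ω * v) := by
  have hsum := hasSum_Aiter_succ hα hβ ht ω
  have hzero : Aiter x0 α ω 0 t = 1 := rfl
  have hsummable : Summable fun n => Aiter x0 α ω n t := (summable_nat_add_iff 1).1 hsum.summable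
  rw [harmE, hsummable.tsum_eq_zero_add, hsum.tsum_eq, hzero]

theorem exists_lp_harmE_eq_one_add_integral (hα : Integrable α) (hα2 : MemLp α 2 volume)
    (ht : x0 ≤ t) :
    ∃ G : Lp ℝ 2 (volume : Measure ℝ), G ∈ lpSupportedOn (Icc 0 (2 * (t - x0))) ∧
      ‖G‖ ≤ √(∫ x, ‖α x‖ ^ 2) / √2 * Real.exp (√(t - x0) * √(∫ x, ‖α x‖ ^ 2)) ∧
      ∀ ω : ℝ, harmE x0 t α ω = 1 + ∫ v, G v * Complex.exp (Complex.I * ω * v) := by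
  have hp : (2 : ℝ≥0∞) ≠ ∞ := ENNReal.ofNat_ne_top
  have hβ := memLp_firstDensity hα2 x0
  refine ⟨∑' n, densityIter x0 α hβ.toLp n t, tsum_densityIter_mem_lpSupportedOn hα hp ht, ?_,
    harmE_eq_one_add_integral hα hβ.coeFn_toLp ht⟩
  refine (norm_tsum_densityIter_le hα hp ht).trans ?_
  rw [norm_toLp_firstDensity hα2]
  gcongr
  exact intervalIntegral_norm_le_sqrt_mul_sqrt hα2 ht

end FourierRepresentation

theorem Aiter_congr {x0 x1 : ℝ} {α α' : ℝ → ℝ} (h : EqOn α α' (Ioc x0 x1)) (ω : ℂ) (n : ℕ) :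
    EqOn (Aiter x0 α ω n) (Aiter x0 α' ω n) (Icc x0 x1) := by
  induction n with
  | zero => exact fun t _ => rfl
  | succ n ih =>
    refine fun t ht => intervalIntegral.integral_congr_ae (.of_forall fun s hs => ?_)
    rw [uIoc_of_le ht.1] at hs
    have hs' : s ∈ Ioc x0 x1 := ⟨hs.1, hs.2.trans ht.2⟩
    rw [h hs', ih (Ioc_subset_Icc_self hs')]

theorem harmE_congr {x0 x1 y : ℝ} {α α' : ℝ → ℝ} (h : EqOn α α' (Ioc x0 x1)) (hy : y ∈ Icc x0 x1)
    (ω : ℂ) : harmE x0 y α ω = harmE x0 y α' ω :=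
  tsum_congr fun n => Aiter_congr h ω n hy

theorem integrable_and_memLp_two_indicator_Ioc {E : Type*} [NormedAddCommGroup E] {f : ℝ → E}
    {a b : ℝ} (hf : IntegrableOn f (Ioo a b))
    (hf2 : IntegrableOn (fun x => ‖f x‖ ^ 2) (Ioo a b)) :
    Integrable ((Ioc a b).indicator f) ∧ MemLp ((Ioc a b).indicator f) 2 volume := by
  rw [← integrableOn_Ioc_iff_integrableOn_Ioo] at hf hf2
  rw [integrable_indicator_iff measurableSet_Ioc, memLp_indicator_iff_restrict measurableSet_Ioc]
  exact ⟨hf, (memLp_two_iff_integrable_sq_norm hf.aestronglyMeasurable).2 hf2⟩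

theorem integral_norm_indicator_Ioc_sq {E : Type*} [NormedAddCommGroup E] (f : ℝ → E) {a b : ℝ}
    (hab : a ≤ b) : ∫ x, ‖(Ioc a b).indicator f x‖ ^ 2 = ∫ x in a..b, ‖f x‖ ^ 2 := by
  rw [intervalIntegral.integral_of_le hab, ← integral_indicator measurableSet_Ioc]
  congr 1 with x
  by_cases hx : x ∈ Ioc a b <;> simp [hx]

/-- Proposition (prop-harmonic-2)(v) with the explicit estimate (minkowski-h-check):
if `α ∈ L¹ ∩ L²`, then `E_α^{(x0,y)} − 1` is the Fourier transform of an `L¹ ∩ L²`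
density `g` supported in `[0, 2(y − x0)]` with
`‖g‖_{L²} ≤ (‖α‖₂/√2) exp(√(x1 − x0)·‖α‖₂)`. -/
theorem harmonic_exponential_L2_fourier_representation
    (x0 x1 y : ℝ) (hx : x0 < x1) (hy : y ∈ Set.Ioc x0 x1)
    (α : ℝ → ℝ)
    (hα : IntegrableOn α (Set.Ioo x0 x1))
    (hα2 : IntegrableOn (fun x => |α x| ^ 2) (Set.Ioo x0 x1))
    (N₂ : ℝ) (hN₂ : N₂ = Real.sqrt (∫ x in x0..x1, |α x| ^ 2)) :
    ∃ g : ℝ → ℂ,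
      (∀ t ∉ Set.Icc (0 : ℝ) (2 * (y - x0)), g t = 0) ∧
      Integrable g ∧
      Integrable (fun t : ℝ => ‖g t‖ ^ 2) ∧
      Real.sqrt (∫ t : ℝ, ‖g t‖ ^ 2)
        ≤ (N₂ / Real.sqrt 2) * Real.exp (Real.sqrt (x1 - x0) * N₂) ∧
      ∀ ω : ℝ, harmE x0 y α (ω : ℂ)
        = 1 + ∫ t : ℝ, g t * Complex.exp (Complex.I * (ω : ℂ) * (t : ℂ)) := by
  obtain ⟨hα', hα2'⟩ := integrable_and_memLp_two_indicator_Ioc hα hα2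
  have hN : √(∫ x, ‖(Ioc x0 x1).indicator α x‖ ^ 2) = N₂ := by
    rw [integral_norm_indicator_Ioc_sq α hx.le, hN₂]
    simp only [Real.norm_eq_abs]
  obtain ⟨G, hsupp, hnorm, hfourier⟩ := exists_lp_harmE_eq_one_add_integral hα' hα2' hy.1.le
  rw [hN] at hnorm
  obtain ⟨g, hg_zero, hg⟩ := exists_ofReal_representative measurableSet_Icc hsupp
  have hg_sq : (fun v => ‖g v‖ ^ 2) =ᵐ[volume] fun v => ‖G v‖ ^ 2 := by
    filter_upwards [hg] with v hv
    rw [hv, Complex.norm_real]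
  refine ⟨g, hg_zero, ?_, ?_, ?_, fun ω => ?_⟩
  · have hintegral := integrable_of_mem_lpSupportedOn measurableSet_Icc measure_Icc_lt_top.ne hsupp
    exact hintegral.ofReal.congr hg.symm
  · exact ((Lp.memLp G).integrable_norm_pow two_ne_zero).congr hg_sq.symm
  · rw [integral_congr_ae hg_sq, ← norm_lp_two_eq_sqrt_integral]
    refine hnorm.trans ?_
    have hN_nonneg : 0 ≤ N₂ := hN ▸ Real.sqrt_nonneg _
    gcongr
    exact hy.2
  · rw [harmE_congr (fun x hx => (indicator_of_mem hx α).symm) (Ioc_subset_Icc_self hy), hfourier]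
    congr 1
    exact integral_congr_ae (hg.symm.mul .rfl)
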